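/- Let x, y be probability vectors of dimension d with strictly positive entries. There exist an integer m ≥ 1 and a probability vector c (of some finite dimension) such that x^{⊗m}⊗c ≺ y^{⊗m}⊗c, if and only if there exists a probability vector c′ (of some finite dimension) such that x⊗c′ ≺ y⊗c′. In other words, multiple-copy catalytic transformation is equivalent to single-copy catalytic transformation. -/

import Mathlib

/-- The sum of the `k` largest entries of a vector (equivalently, for vectors with
nonnegative entries, the maximum of `∑ i ∈ s, x i` over subsets `s` of cardinality at
most `k`; this also accounts for padding with zeros). -/
noncomputable def topSum {ι : Type*} [Fintype ι] [DecidableEq ι] (x : ι → ℝ) (k : ℕ) : ℝ :=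
  ((Finset.univ : Finset ι).powerset.filter (fun s => s.card ≤ k)).sup'
    ⟨∅, by simp⟩ (fun s => ∑ i ∈ s, x i)

/-- A probability vector: nonnegative entries summing to 1. -/
def IsProbVec {ι : Type*} [Fintype ι] (x : ι → ℝ) : Prop :=
  (∀ i, 0 ≤ x i) ∧ ∑ i, x i = 1

/-- `x ≺ y` (majorization, after padding with zeros to a common dimension): every partial
sum of the `k` largest entries of `x` is at most that of `y`, with equal total sums. -/
def PMaj {ι κ : Type*} [Fintype ι] [DecidableEq ι] [Fintype κ] [DecidableEq κ]
    (x : ι → ℝ) (y : κ → ℝ) : Prop :=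
  (∀ k : ℕ, topSum x k ≤ topSum y k) ∧ (∑ i, x i = ∑ j, y j)

/-- Tensor product of two vectors: `(x ⊗ y)_{(i,j)} = x_i y_j`. -/
def pvTensor {ι κ : Type*} (x : ι → ℝ) (y : κ → ℝ) : ι × κ → ℝ :=
  fun p => x p.1 * y p.2

/-- The `m`-fold tensor power of a vector, indexed by tuples `Fin m → Fin d`. -/
def pvPow {d : ℕ} (x : Fin d → ℝ) (m : ℕ) : (Fin m → Fin d) → ℝ :=
  fun f => ∏ j, x (f j)

section TopSum

variable {ι κ μ : Type*} [Fintype ι] [DecidableEq ι] [Fintype κ] [DecidableEq κ]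
  [Fintype μ] [DecidableEq μ]

theorem topSum_le_iff (x : ι → ℝ) (k : ℕ) (a : ℝ) :
    topSum x k ≤ a ↔ ∀ s : Finset ι, s.card ≤ k → ∑ i ∈ s, x i ≤ a := by
  simp [topSum, Finset.sup'_le_iff]

theorem sum_le_topSum (x : ι → ℝ) {k : ℕ} {s : Finset ι} (hs : s.card ≤ k) :
    ∑ i ∈ s, x i ≤ topSum x k :=
  (topSum_le_iff x k _).1 le_rfl s hs

theorem exists_sum_eq_topSum (x : ι → ℝ) (k : ℕ) :
    ∃ s : Finset ι, s.card ≤ k ∧ topSum x k = ∑ i ∈ s, x i := by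
  obtain ⟨s, hs, h⟩ := Finset.exists_mem_eq_sup'
    (s := (Finset.univ : Finset ι).powerset.filter (fun s => s.card ≤ k))
    ⟨∅, by simp⟩ (fun s => ∑ i ∈ s, x i)
  exact ⟨s, (Finset.mem_filter.1 hs).2, h⟩

theorem topSum_comp_equiv (e : ι ≃ κ) (y : κ → ℝ) (k : ℕ) :
    topSum (fun i => y (e i)) k = topSum y k := by
  apply le_antisymm <;> refine (topSum_le_iff _ _ _).2 fun s hs => ?_
  · simpa using sum_le_topSum y (s := s.map e.toEmbedding) (by simpa using hs)
  · simpa using sum_le_topSum (fun i => y (e i)) (s := s.map e.symm.toEmbedding)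
      (by simpa using hs)

theorem topSum_mul_left {a : ℝ} (ha : 0 ≤ a) (x : ι → ℝ) (k : ℕ) :
    topSum (fun i => a * x i) k = a * topSum x k := by
  apply le_antisymm
  · refine (topSum_le_iff _ _ _).2 fun s hs => ?_
    rw [← Finset.mul_sum]
    exact mul_le_mul_of_nonneg_left (sum_le_topSum x hs) ha
  · obtain ⟨s, hs, h⟩ := exists_sum_eq_topSum x k
    rw [h, Finset.mul_sum]
    exact sum_le_topSum (fun i => a * x i) hs

theorem PMaj.mul_left {x : ι → ℝ} {y : κ → ℝ} (h : PMaj x y) {a : ℝ} (ha : 0 ≤ a) :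
    PMaj (fun i => a * x i) (fun j => a * y j) := by
  refine ⟨fun k => ?_, by rw [← Finset.mul_sum, ← Finset.mul_sum, h.2]⟩
  rw [topSum_mul_left ha, topSum_mul_left ha]
  exact mul_le_mul_of_nonneg_left (h.1 k) ha

theorem PMaj.comp_equiv {ι' κ' : Type*} [Fintype ι'] [DecidableEq ι'] [Fintype κ']
    [DecidableEq κ'] {x : ι → ℝ} {y : κ → ℝ} (h : PMaj x y) (e : ι' ≃ ι) (e' : κ' ≃ κ) :
    PMaj (fun i => x (e i)) (fun j => y (e' j)) := by
  refine ⟨fun k => ?_, by rw [Equiv.sum_comp e, Equiv.sum_comp e', h.2]⟩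
  rw [topSum_comp_equiv, topSum_comp_equiv]
  exact h.1 k

/-- Majorization is preserved by adjoining a common direct summand. -/
theorem PMaj.sumElim {x : ι → ℝ} {y : κ → ℝ} (h : PMaj x y) (z : μ → ℝ) :
    PMaj (Sum.elim x z) (Sum.elim y z) := by
  refine ⟨fun k => (topSum_le_iff _ _ _).2 fun s hs => ?_, by simp [h.2]⟩
  obtain ⟨t, ht, hty⟩ := exists_sum_eq_topSum y s.toLeft.card
  have hx := sum_le_topSum x (le_refl s.toLeft.card)
  have hy := sum_le_topSum (Sum.elim y z) (k := k) (s := t.disjSum s.toRight) (by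
    rw [Finset.card_disjSum]
    have := s.card_toLeft_add_card_toRight
    omega)
  rw [Finset.sum_disjSum] at hy
  rw [← Finset.toLeft_disjSum_toRight (u := s), Finset.sum_disjSum]
  simp only [Sum.elim_inl, Sum.elim_inr] at hy ⊢
  have := h.1 s.toLeft.card
  linarith

/-- If the last vector of a family is majorized by the first one, then the direct sum of all
vectors but the first is majorized by the direct sum of all vectors but the last. -/
theorem PMaj.telescope {n : ℕ} (F : Fin (n + 2) → ι → ℝ) (h : PMaj (F (Fin.last _)) (F 0)) :
    PMaj (fun p : Fin (n + 1) × ι => F p.1.succ p.2)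
      (fun p : Fin (n + 1) × ι => F p.1.castSucc p.2) := by
  have key := (h.sumElim (fun p : Fin n × ι => F p.1.succ.castSucc p.2)).comp_equiv
    (((finSuccEquivLast (n := n)).prodCongr (Equiv.refl ι)).trans optionProdEquiv)
    (((finSuccEquiv n).prodCongr (Equiv.refl ι)).trans optionProdEquiv)
  convert key using 2 with p p
  · obtain ⟨i, t⟩ := p
    induction i using Fin.lastCases <;> simp
  · obtain ⟨i, t⟩ := p
    induction i using Fin.cases <;> simp

end TopSum

/-- The tensor product of `i` copies of `x` followed by `n - i` copies of `y`. -/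
def hybridPow {d : ℕ} (x y : Fin d → ℝ) (n i : ℕ) : (Fin n → Fin d) → ℝ :=
  fun f => ∏ j : Fin n, if (j : ℕ) < i then x (f j) else y (f j)

section HybridPow

variable {d : ℕ} (x y : Fin d → ℝ)

theorem hybridPow_zero (n : ℕ) : hybridPow x y n 0 = pvPow y n := by
  funext f
  simp [hybridPow, pvPow]

theorem hybridPow_self (n : ℕ) : hybridPow x y n n = pvPow x n := by
  funext f
  simp [hybridPow, pvPow]

theorem hybridPow_cons (n i : ℕ) (a : Fin d) (f : Fin n → Fin d) :
    hybridPow x y (n + 1) (i + 1) (Fin.cons a f) = x a * hybridPow x y n i f := by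
  simp [hybridPow, Fin.prod_univ_succ]

theorem hybridPow_snoc {n i : ℕ} (hi : i ≤ n) (a : Fin d) (f : Fin n → Fin d) :
    hybridPow x y (n + 1) i (Fin.snoc f a : Fin (n + 1) → Fin d) =
      y a * hybridPow x y n i f := by
  simp [hybridPow, Fin.prod_univ_castSucc, hi.not_gt, mul_comm]

theorem hybridPow_isProbVec (hx : IsProbVec x) (hy : IsProbVec y) (n i : ℕ) :
    IsProbVec (hybridPow x y n i) := by
  refine ⟨fun f => Finset.prod_nonneg fun j _ => ?_, ?_⟩
  · split_ifs
    exacts [hx.1 _, hy.1 _]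
  · have h := Fintype.prod_sum
      (fun (j : Fin n) (a : Fin d) => if (j : ℕ) < i then x a else y a)
    rw [show (∑ f, hybridPow x y n i f) = _ from h.symm]
    refine Finset.prod_eq_one fun j _ => ?_
    split_ifs
    exacts [hx.2, hy.2]

end HybridPow

theorem exists_fin_catalyst {d : ℕ} {x y : Fin d → ℝ} {ι : Type*} [Fintype ι] [DecidableEq ι]
    {c : ι → ℝ} (hc : IsProbVec c) (h : PMaj (pvTensor x c) (pvTensor y c)) :
    ∃ (k : ℕ) (c' : Fin k → ℝ), IsProbVec c' ∧ PMaj (pvTensor x c') (pvTensor y c') := by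
  let e := (Fintype.equivFin ι).symm
  refine ⟨Fintype.card ι, fun i => c (e i), ⟨fun i => hc.1 _, ?_⟩, ?_⟩
  · rw [Equiv.sum_comp e, hc.2]
  · exact h.comp_equiv ((Equiv.refl _).prodCongr e) ((Equiv.refl _).prodCongr e)

theorem exists_catalyst_of_multicopy {d n k : ℕ} {x y : Fin d → ℝ} (hx : IsProbVec x)
    (hy : IsProbVec y) {c : Fin k → ℝ} (hc : IsProbVec c)
    (h : PMaj (pvTensor (pvPow x (n + 1)) c) (pvTensor (pvPow y (n + 1)) c)) :
    ∃ (k' : ℕ) (c' : Fin k' → ℝ), IsProbVec c' ∧ PMaj (pvTensor x c') (pvTensor y c') := by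
  have hw : (0 : ℝ) ≤ ((n : ℝ) + 1)⁻¹ := by positivity
  let F : Fin (n + 2) → (Fin (n + 1) → Fin d) × Fin k → ℝ := fun i p =>
    ((n : ℝ) + 1)⁻¹ * pvTensor (hybridPow x y (n + 1) i) c p
  have hF : PMaj (F (Fin.last _)) (F 0) := by
    have := h.mul_left hw
    simpa only [F, Fin.val_last, Fin.val_zero, hybridPow_self, hybridPow_zero] using this
  let c' : Fin (n + 1) × (Fin n → Fin d) × Fin k → ℝ := fun p =>
    ((n : ℝ) + 1)⁻¹ * pvTensor (hybridPow x y n p.1) c p.2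
  let assoc : Fin d × Fin (n + 1) × (Fin n → Fin d) × Fin k ≃
      Fin (n + 1) × (Fin d × (Fin n → Fin d)) × Fin k :=
    { toFun := fun p => (p.2.1, (p.1, p.2.2.1), p.2.2.2)
      invFun := fun p => (p.2.1.1, p.1, p.2.1.2, p.2.2)
      left_inv := fun _ => rfl
      right_inv := fun _ => rfl }
  let tuple (e : Fin d × (Fin n → Fin d) ≃ (Fin (n + 1) → Fin d)) :=
    assoc.trans ((Equiv.refl (Fin (n + 1))).prodCongr (e.prodCongr (Equiv.refl (Fin k))))
  refine exists_fin_catalyst (c := c') ⟨fun p => ?_, ?_⟩ ?_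
  · exact mul_nonneg hw (mul_nonneg ((hybridPow_isProbVec x y hx hy _ _).1 _) (hc.1 _))
  · have hsum (i : Fin (n + 1)) : ∑ q, pvTensor (hybridPow x y n i) c q = 1 := by
      simp only [pvTensor, Fintype.sum_prod_type, ← Finset.mul_sum, hc.2, mul_one,
        (hybridPow_isProbVec x y hx hy n i).2]
    rw [Fintype.sum_prod_type]
    simp only [c', ← Finset.mul_sum, hsum]
    simp
    field_simp
  · convert (PMaj.telescope F hF).comp_equiv
      (tuple (Fin.consEquiv fun _ => Fin d)) (tuple (Fin.snocEquiv fun _ => Fin d)) using 2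
      with p p
    · simp [tuple, assoc, F, c', pvTensor, Fin.consEquiv, hybridPow_cons]
      ring
    · simp [tuple, assoc, F, c', pvTensor, Fin.snocEquiv,
        hybridPow_snoc x y (Nat.le_of_lt_succ p.2.1.isLt)]
      ring

/-- Duan–Feng–Li–Ying: multiple-copy catalytic transformation is equivalent to
single-copy catalytic transformation. -/
theorem multicopy_catalysis_iff_single {d : ℕ} (x y : Fin d → ℝ)
    (hx : IsProbVec x) (hy : IsProbVec y)
    (hxp : ∀ i, 0 < x i) (hyp : ∀ i, 0 < y i) :
    (∃ m : ℕ, 1 ≤ m ∧ ∃ (k : ℕ) (c : Fin k → ℝ), IsProbVec c ∧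
        PMaj (pvTensor (pvPow x m) c) (pvTensor (pvPow y m) c)) ↔
      (∃ (k' : ℕ) (c' : Fin k' → ℝ), IsProbVec c' ∧
        PMaj (pvTensor x c') (pvTensor y c')) := by
  constructor
  · rintro ⟨m, hm, k, c, hc, h⟩
    obtain ⟨n, rfl⟩ := Nat.exists_eq_add_of_le' hm
    exact exists_catalyst_of_multicopy hx hy hc h
  · rintro ⟨k, c, hc, h⟩
    refine ⟨1, le_rfl, k, c, hc, ?_⟩
    let e := (Equiv.funUnique (Fin 1) (Fin d)).prodCongr (Equiv.refl (Fin k))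
    convert h.comp_equiv e e using 2 <;> simp [e, pvTensor, pvPow]
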